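/- Let m, r, μ be integers with m ≥ 2, r ≥ 1, μ ≥ 1, μ ≤ m³(2m−3), and r ≤ (1/2)·m(m−1)(μ+1) − 1. Then, as rational numbers, μ + m − r + 2rm + r·m(m−1)(1+r)/μ ≤ φ(m), where φ(m) = m^{10} − (9/2)m^9 + (15/2)m^8 − (7/2)m^7 − 4m^6 + 4m^5 + m^4 − (1/2)m^3 − (5/2)m^2 − (1/2)m + 1. -/

import Mathlib

/-!
Put `a = m(m-1)/2`, so that the claw bound reads `r + 1 ≤ a(μ+1)`. The left-hand side is increasing
in `r`, and at the extreme value of `r` its quadratic term is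
`2a²(μ+1)(a(μ+1)-1)/μ = 2a²(aμ + 2a - 1 + (a-1)/μ)`, which is at most `2a²(aμ + 3a - 2)` as `a, μ ≥ 1`.
The resulting upper bound is linear and increasing in `μ`, so `μ` may be replaced by `m³(2m-3)`.
What is left is a polynomial inequality in `m` whose difference of sides has nonnegative
coefficients when expanded in powers of `m - 2`.
-/

namespace DRG

/-- The arithmetic inequality behind Corollary 2.4. -/
theorem statement_10 (m r μ : ℤ) (hm : 2 ≤ m) (hr : 1 ≤ r) (hμ : 1 ≤ μ)
    (hμb : μ ≤ m^3 * (2*m - 3))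
    (hrb : (r : ℚ) ≤ (1/2 : ℚ) * (m : ℚ) * ((m : ℚ) - 1) * ((μ : ℚ) + 1) - 1) :
    (μ : ℚ) + (m : ℚ) - (r : ℚ) + 2*(r : ℚ)*(m : ℚ)
      + (r : ℚ)*(m : ℚ)*((m : ℚ) - 1)*(1 + (r : ℚ))/(μ : ℚ) ≤
    (m : ℚ)^10 - (9/2)*(m : ℚ)^9 + (15/2)*(m : ℚ)^8 - (7/2)*(m : ℚ)^7 - 4*(m : ℚ)^6
      + 4*(m : ℚ)^5 + (m : ℚ)^4 - (1/2)*(m : ℚ)^3 - (5/2)*(m : ℚ)^2 - (1/2)*(m : ℚ) + 1 := by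
  have hm' : (2 : ℚ) ≤ m := by exact_mod_cast hm
  have hr' : (1 : ℚ) ≤ r := by exact_mod_cast hr
  have hu' : (1 : ℚ) ≤ μ := by exact_mod_cast hμ
  have hub : (μ : ℚ) ≤ (m : ℚ)^3 * (2*m - 3) := by exact_mod_cast hμb
  generalize (m : ℚ) = x at *
  generalize (r : ℚ) = s at *
  generalize (μ : ℚ) = u at *
  obtain ⟨a, ha⟩ : ∃ a : ℚ, a = x * (x - 1) / 2 := ⟨_, rfl⟩
  have ha1 : 1 ≤ a := by rw [ha]; nlinarith
  have hs : s ≤ a * (u + 1) - 1 := by rw [ha]; linarith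
  have hquad : s * x * (x - 1) * (1 + s) / u ≤ 2 * a^2 * (a * u + 3 * a - 2) := by
    rw [div_le_iff₀ (by linarith)]
    have h1 : s * (1 + s) ≤ (a * (u + 1) - 1) * (a * (u + 1)) := by
      apply mul_le_mul hs (by linarith) (by linarith) (by linarith)
    -- The gap between the two sides is `2a²(a-1)(u-1)`.
    have h2 : 0 ≤ 2 * a^2 * ((a - 1) * (u - 1)) :=
      mul_nonneg (by positivity) (mul_nonneg (by linarith) (by linarith))
    have h3 := mul_le_mul_of_nonneg_left h1 (show 0 ≤ 2 * a by linarith)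
    have h4 : s * x * (x - 1) * (1 + s) = 2 * a * (s * (1 + s)) := by rw [ha]; ring
    rw [h4]
    linarith
  have hlin : (2 * x - 1) * s ≤ (2 * x - 1) * (a * (u + 1) - 1) :=
    mul_le_mul_of_nonneg_left hs (by linarith)
  have hmono : (1 + (2 * x - 1) * a + 2 * a^3) * u
      ≤ (1 + (2 * x - 1) * a + 2 * a^3) * (x^3 * (2 * x - 3)) := by
    apply mul_le_mul_of_nonneg_left hub
    have : 0 ≤ (2 * x - 1) * a := mul_nonneg (by linarith) (by linarith)
    positivity
  have hpoly : (1 + (2 * x - 1) * a + 2 * a^3) * (x^3 * (2 * x - 3)) + x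
      + (2 * x - 1) * (a - 1) + 2 * a^2 * (3 * a - 2) ≤
      x^10 - (9/2)*x^9 + (15/2)*x^8 - (7/2)*x^7 - 4*x^6
      + 4*x^5 + x^4 - (1/2)*x^3 - (5/2)*x^2 - (1/2)*x + 1 := by
    obtain ⟨t, rfl⟩ : ∃ t, x = t + 2 := ⟨x - 2, by ring⟩
    have ht : 0 ≤ t := by linarith
    rw [ha, ← sub_nonneg]
    ring_nf
    positivity
  linarith

end DRG
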